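/- arXiv:1203.5626 — 3 statements merged into one kernel-verified Lean document; each statement's English description precedes it below -/
import Mathlib

section
/- For an absolutely continuous random vector Y in ℝ^p, if Pr[Y ∈ H] = 1/2 for every central halfspace H (one whose boundary hyperplane contains the origin), then Y is directionally symmetric, i.e., Y/‖Y‖ has the same distribution as -Y/‖Y‖. -/
open MeasureTheory ProbabilityTheory Metric
open scoped RealInnerProductSpace ENNReal

/-!
The hypothesis says that `sign ⟪u, Y⟫` has mean zero for every vector `u`. Average this over
`u = ξ + a` with `ξ` standard Gaussian: since `⟪ξ, e⟫` is standard normal for every unit vector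
`e`, the result depends only on the direction of `Y`, namely `∫ t in 0..s, φ t` has mean zero,
where `s = ⟪a, Y / ‖Y‖⟫` and `φ` is the standard normal density. Replacing `a` by `l • a` and
differentiating in `l` shows that `s * exp (-(l * s) ^ 2 / 2)` has mean zero. With `l = √n`, the
variable `s` is orthogonal to all powers of `exp (-s ^ 2 / 2)`, hence by the Weierstrass theorem to
every continuous function of it. As `s` is bounded, `sinc s` is such a function, so `sin s` has mean
zero for every `a`: the characteristic function of `Y / ‖Y‖` is real.
-/

section SignIntegrals

open Set SignType

lemma coe_sign_eq_indicator_sub_indicator (r : ℝ) :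
    (sign r : ℝ) = (Ici 0).indicator 1 r - (Iic 0).indicator 1 r := by
  rcases lt_trichotomy r 0 with h | rfl | h
  · simp [sign_neg h, h.le, h.not_ge]
  · simp
  · simp [sign_pos h, h.le, h.not_ge]

lemma abs_coe_sign_le_one (r : ℝ) : |(sign r : ℝ)| ≤ 1 := by
  cases sign r <;> simp

lemma measurable_coe_sign : Measurable fun r : ℝ ↦ (sign r : ℝ) := by
  simp only [coe_sign_eq_indicator_sub_indicator]
  exact (measurable_one.indicator measurableSet_Ici).sub
    (measurable_one.indicator measurableSet_Iic)

lemma integral_coe_sign {α : Type*} [MeasurableSpace α] {μ : Measure α} [IsFiniteMeasure μ]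
    {f : α → ℝ} (hf : Measurable f) :
    ∫ x, (sign (f x) : ℝ) ∂μ = μ.real {x | 0 ≤ f x} - μ.real {x | f x ≤ 0} := by
  have hnonneg : MeasurableSet {x | 0 ≤ f x} := hf measurableSet_Ici
  have hnonpos : MeasurableSet {x | f x ≤ 0} := hf measurableSet_Iic
  rw [← integral_indicator_one hnonneg, ← integral_indicator_one hnonpos, ← integral_sub
    ((integrable_const 1).indicator hnonneg) ((integrable_const 1).indicator hnonpos)]
  exact integral_congr_ae (.of_forall fun x ↦ coe_sign_eq_indicator_sub_indicator (f x))

lemma integral_coe_sign_add_mul_of_even {f : ℝ → ℝ} (hf : Integrable f) (heven : f.Even) (s : ℝ) :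
    ∫ t, (sign (t + s) : ℝ) * f t = 2 * ∫ t in 0..s, f t := by
  have hsplit (t : ℝ) :
      (sign (t + s) : ℝ) * f t = (Ici (-s)).indicator f t - (Iic (-s)).indicator f t := by
    simp only [coe_sign_eq_indicator_sub_indicator, indicator_apply, mem_Ici, mem_Iic,
      neg_le_iff_add_nonneg, le_neg_iff_add_nonpos_right, Pi.one_apply, sub_mul, ite_mul, one_mul,
      zero_mul]
  have hreflect : ∫ t in Ici (-s), f t = ∫ t in Iic s, f t := by
    rw [integral_Ici_eq_integral_Ioi, ← integral_comp_neg_Iic]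
    simp only [heven _]
  have hleft : ∫ t in (-s)..0, f t = ∫ t in 0..s, f t := by
    rw [← neg_zero, ← intervalIntegral.integral_comp_neg]
    simp only [heven _, neg_zero]
  calc ∫ t, (sign (t + s) : ℝ) * f t
      = (∫ t in Iic s, f t) - ∫ t in Iic (-s), f t := by
        simp only [hsplit]
        rw [integral_sub (hf.indicator measurableSet_Ici) (hf.indicator measurableSet_Iic),
          integral_indicator measurableSet_Ici, integral_indicator measurableSet_Iic, hreflect]
    _ = ∫ t in (-s)..s, f t :=
        intervalIntegral.integral_Iic_sub_Iic hf.integrableOn hf.integrableOn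
    _ = 2 * ∫ t in 0..s, f t := by
        rw [← intervalIntegral.integral_add_adjacent_intervals (b := 0) hf.intervalIntegrable
          hf.intervalIntegrable, hleft, two_mul]

end SignIntegrals

section GaussianDensity

open SignType

lemma continuous_gaussianPDFReal (m : ℝ) (v : NNReal) : Continuous (gaussianPDFReal m v) := by
  unfold gaussianPDFReal
  fun_prop

lemma gaussianPDFReal_zero_one_apply (s : ℝ) :
    gaussianPDFReal 0 1 s = (√(2 * Real.pi))⁻¹ * Real.exp (-s ^ 2 / 2) := by
  simp [gaussianPDFReal]

lemma abs_gaussianPDFReal_le (m : ℝ) (v : NNReal) (s : ℝ) :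
    |gaussianPDFReal m v s| ≤ (√(2 * Real.pi * v))⁻¹ := by
  rw [abs_of_nonneg (gaussianPDFReal_nonneg m v s), gaussianPDFReal]
  refine mul_le_of_le_one_right (by positivity) (Real.exp_le_one_iff.2 ?_)
  exact div_nonpos_of_nonpos_of_nonneg (neg_nonpos.2 (sq_nonneg _)) (by positivity)

lemma integral_coe_sign_add_gaussianReal {v : NNReal} (hv : v ≠ 0) (s : ℝ) :
    ∫ t, (sign (t + s) : ℝ) ∂gaussianReal 0 v = 2 * ∫ t in 0..s, gaussianPDFReal 0 v t := by
  have heven : (gaussianPDFReal 0 v).Even := fun t ↦ by simp [gaussianPDFReal]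
  rw [integral_gaussianReal_eq_integral_smul hv,
    ← integral_coe_sign_add_mul_of_even (integrable_gaussianPDFReal 0 v) heven]
  simp only [smul_eq_mul, mul_comm]

end GaussianDensity

section IntegralIdentities

open Set

variable {α : Type*} [MeasurableSpace α] {ν : Measure α}

lemma hasDerivAt_integral_comp_mul {F f : ℝ → ℝ} {v : α → ℝ} {C : ℝ}
    (hF : ∀ s, HasDerivAt F (f s) s) (hf : ∀ s, |f s| ≤ C) (hv : Integrable v ν) {l : ℝ}
    (hFv : Integrable (fun x ↦ F (l * v x)) ν) :
    HasDerivAt (fun l ↦ ∫ x, F (l * v x) ∂ν) (∫ x, v x * f (l * v x) ∂ν) l := by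
  have hF_meas : Measurable F :=
    (continuous_iff_continuousAt.2 fun s ↦ (hF s).continuousAt).measurable
  have hf_meas : Measurable f := by
    rw [show f = deriv F from funext fun s ↦ (hF s).deriv.symm]
    exact measurable_deriv F
  refine (hasDerivAt_integral_of_dominated_loc_of_deriv_le (bound := fun x ↦ |v x| * C)
    (F' := fun l x ↦ v x * f (l * v x)) Filter.univ_mem
    (.of_forall fun l ↦
      (hF_meas.comp_aemeasurable (hv.aemeasurable.const_mul l)).aestronglyMeasurable)
    hFv
    (hv.aemeasurable.mul
      (hf_meas.comp_aemeasurable (hv.aemeasurable.const_mul l))).aestronglyMeasurable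
    (.of_forall fun x l _ ↦ ?_) (hv.abs.mul_const C) (.of_forall fun x l _ ↦ ?_)).2
  · rw [norm_mul, Real.norm_eq_abs, Real.norm_eq_abs]
    exact mul_le_mul_of_nonneg_left (hf _) (abs_nonneg _)
  · rw [mul_comm]
    exact (hF _).comp l (hasDerivAt_mul_const (v x))

lemma integral_mul_comp_mul_eq_zero_of_integral_primitive_eq_zero {f : ℝ → ℝ} {v : α → ℝ}
    {C : ℝ} (hf : Continuous f) (hfC : ∀ s, |f s| ≤ C) (hv : Integrable v ν)
    (hprim : ∀ l : ℝ, ∫ x, (∫ t in 0..l * v x, f t) ∂ν = 0) (l : ℝ) :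
    ∫ x, v x * f (l * v x) ∂ν = 0 := by
  have hderiv (s : ℝ) : HasDerivAt (fun s ↦ ∫ t in 0..s, f t) (f s) s :=
    (hf.integral_hasStrictDerivAt 0 s).hasDerivAt
  have hcont : Continuous fun s ↦ ∫ t in 0..s, f t :=
    continuous_iff_continuousAt.2 fun s ↦ (hderiv s).continuousAt
  have hint : Integrable (fun x ↦ ∫ t in 0..l * v x, f t) ν := by
    refine ((hv.const_mul l).abs.const_mul C).mono'
      (hcont.comp_aestronglyMeasurable (hv.1.const_mul l)) (.of_forall fun x ↦ ?_)
    simpa only [sub_zero] using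
      intervalIntegral.norm_integral_le_of_norm_le_const (a := 0) (b := l * v x) (f := f)
        fun t _ ↦ hfC t
  have h := hasDerivAt_integral_comp_mul hderiv hfC hv hint
  simp only [hprim] at h
  exact h.unique (hasDerivAt_const l 0)

lemma integral_mul_polynomial_eval_eq_zero {f v : α → ℝ}
    (hint : ∀ n : ℕ, Integrable (fun x ↦ f x * v x ^ n) ν)
    (hmoment : ∀ n : ℕ, ∫ x, f x * v x ^ n ∂ν = 0) (q : Polynomial ℝ) :
    ∫ x, f x * q.eval (v x) ∂ν = 0 := by
  simp only [Polynomial.eval_eq_sum_range, Finset.mul_sum, mul_left_comm (f _)]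
  rw [integral_finsetSum _ fun n _ ↦ (hint n).const_mul _]
  simp only [integral_const_mul, hmoment, mul_zero, Finset.sum_const_zero]

lemma integral_mul_comp_eq_zero_of_integral_mul_pow_eq_zero {f v : α → ℝ} {b c : ℝ}
    (hf : Integrable f ν) (hv : AEStronglyMeasurable v ν) (hvbc : ∀ᵐ x ∂ν, v x ∈ Icc b c)
    (hmoment : ∀ n : ℕ, ∫ x, f x * v x ^ n ∂ν = 0) {g : ℝ → ℝ} (hg : ContinuousOn g (Icc b c)) :
    ∫ x, f x * g (v x) ∂ν = 0 := by
  have hint (n : ℕ) : Integrable (fun x ↦ f x * v x ^ n) ν := by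
    obtain ⟨M, hM⟩ := isCompact_Icc.exists_bound_of_continuousOn
      (continuousOn_id.pow n : ContinuousOn (fun y : ℝ ↦ y ^ n) (Icc b c))
    exact hf.mul_bdd (hv.pow n) (hvbc.mono fun x hx ↦ hM _ hx)
  obtain ⟨M, hM⟩ := isCompact_Icc.exists_bound_of_continuousOn hg
  choose q hq using fun n : ℕ ↦
    exists_polynomial_near_of_continuousOn b c g hg _ (Nat.one_div_pos_of_nat (n := n))
  have hlim : Filter.Tendsto (fun n ↦ ∫ x, f x * (q n).eval (v x) ∂ν) Filter.atTop
      (nhds (∫ x, f x * g (v x) ∂ν)) := by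
    refine tendsto_integral_of_dominated_convergence (fun x ↦ |f x| * (1 + M))
      (fun n ↦ hf.1.mul ((q n).continuous.comp_aestronglyMeasurable hv)) (hf.abs.mul_const _)
      (fun n ↦ hvbc.mono fun x hx ↦ ?_) (hvbc.mono fun x hx ↦ ?_)
    · have hq_le : |(q n).eval (v x) - g (v x)| ≤ 1 :=
        (hq n _ hx).le.trans (Nat.one_div_le_one_div n.zero_le |>.trans (by simp))
      rw [norm_mul, Real.norm_eq_abs]
      gcongr
      calc ‖(q n).eval (v x)‖ = ‖((q n).eval (v x) - g (v x)) + g (v x)‖ := by rw [sub_add_cancel]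
        _ ≤ 1 + M := norm_add_le_of_le hq_le (hM _ hx)
    · refine Filter.Tendsto.const_mul _ (tendsto_iff_norm_sub_tendsto_zero.2 ?_)
      exact squeeze_zero (fun n ↦ norm_nonneg _) (fun n ↦ (hq n _ hx).le)
        tendsto_one_div_add_atTop_nhds_zero_nat
  simp only [integral_mul_polynomial_eval_eq_zero hint hmoment] at hlim
  exact tendsto_nhds_unique hlim tendsto_const_nhds

lemma sin_eq_mul_sinc_sqrt_log (s : ℝ) :
    Real.sin s = s * Real.sinc √(-2 * Real.log (Real.exp (-s ^ 2 / 2))) := by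
  have hsinc : Real.sinc |s| = Real.sinc s := by
    rcases abs_choice s with h | h <;> rw [h]
    exact Real.sinc_neg s
  rw [Real.log_exp, show -2 * (-s ^ 2 / 2) = s ^ 2 by ring, Real.sqrt_sq_eq_abs, hsinc]
  rcases eq_or_ne s 0 with rfl | hs
  · simp
  · rw [Real.sinc_of_ne_zero hs, mul_div_cancel₀ _ hs]

lemma integral_sin_eq_zero_of_integral_mul_exp_pow_eq_zero [IsFiniteMeasure ν] {v : α → ℝ}
    {R : ℝ} (hv : AEStronglyMeasurable v ν) (hR : ∀ᵐ x ∂ν, |v x| ≤ R)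
    (hexp : ∀ n : ℕ, ∫ x, v x * Real.exp (-v x ^ 2 / 2) ^ n ∂ν = 0) :
    ∫ x, Real.sin (v x) ∂ν = 0 := by
  have hcont : ContinuousOn (fun y ↦ Real.sinc √(-2 * Real.log y))
      (Icc (Real.exp (-R ^ 2 / 2)) 1) := by
    refine Real.continuous_sinc.comp_continuousOn (ContinuousOn.sqrt ?_)
    exact continuousOn_const.mul
      (Real.continuousOn_log.mono fun y hy ↦ ((Real.exp_pos _).trans_le hy.1).ne')
  have hmem : ∀ᵐ x ∂ν, Real.exp (-v x ^ 2 / 2) ∈ Icc (Real.exp (-R ^ 2 / 2)) 1 := by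
    filter_upwards [hR] with x hx
    refine ⟨Real.exp_le_exp.2 ?_, Real.exp_le_one_iff.2 ?_⟩
    · linarith [sq_le_sq.2 (hx.trans (le_abs_self R))]
    · linarith [sq_nonneg (v x)]
  simp only [sin_eq_mul_sinc_sqrt_log]
  exact integral_mul_comp_eq_zero_of_integral_mul_pow_eq_zero (.of_bound hv R hR)
    ((by fun_prop : Continuous fun s : ℝ ↦ Real.exp (-s ^ 2 / 2)).comp_aestronglyMeasurable hv)
    hmem hexp hcont

end IntegralIdentities

section Normalize

variable {V : Type*} [NormedAddCommGroup V] [NormedSpace ℝ V]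

lemma norm_normalize_le_one (x : V) : ‖NormedSpace.normalize x‖ ≤ 1 := by
  rcases eq_or_ne x 0 with rfl | hx
  · simp
  · exact (NormedSpace.norm_normalize hx).le

@[fun_prop]
lemma measurable_normalize [SecondCountableTopology V] [MeasurableSpace V] [BorelSpace V] :
    Measurable (NormedSpace.normalize : V → V) := by
  unfold NormedSpace.normalize
  fun_prop

end Normalize

section DirectionalSymmetry

open SignType

variable {E : Type*} [NormedAddCommGroup E] [InnerProductSpace ℝ E]

lemma abs_inner_normalize_le (a x : E) : |⟪a, NormedSpace.normalize x⟫| ≤ ‖a‖ :=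
  (abs_real_inner_le_norm a _).trans
    (mul_le_of_le_one_right (norm_nonneg a) (norm_normalize_le_one x))

lemma sign_inner_normalize (a x : E) : sign ⟪a, NormedSpace.normalize x⟫ = sign ⟪a, x⟫ := by
  rcases eq_or_ne x 0 with rfl | hx
  · simp
  · rw [NormedSpace.normalize, real_inner_smul_right, sign_mul,
      sign_pos (inv_pos.2 (norm_pos_iff.2 hx)), one_mul]

variable [MeasurableSpace E] [BorelSpace E] {ν : Measure E} [IsFiniteMeasure ν]

lemma map_neg_eq_self_of_integral_sin_inner_eq_zero [SecondCountableTopology E] [CompleteSpace E]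
    (hsin : ∀ a : E, ∫ x, Real.sin ⟪a, x⟫ ∂ν = 0) :
    ν.map (fun x ↦ -x) = ν := by
  refine Measure.ext_of_charFun (funext fun a ↦ ?_)
  have hneg : charFun (ν.map fun x ↦ -x) a = charFun ν (-a) := by
    rw [charFun_apply, charFun_apply, integral_map (by fun_prop) (by fun_prop)]
    simp only [inner_neg_left, inner_neg_right]
  have hint : Integrable (fun x ↦ Complex.exp (⟪x, a⟫ * Complex.I)) ν :=
    .of_bound (by fun_prop) 1 (.of_forall fun x ↦ (Complex.norm_exp_ofReal_mul_I _).le)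
  have him : (charFun ν a).im = ∫ x, Real.sin ⟪a, x⟫ ∂ν := by
    rw [charFun_apply, ← RCLike.im_to_complex, ← integral_im hint]
    simp only [RCLike.im_to_complex, Complex.exp_ofReal_mul_I_im, real_inner_comm]
  rw [hneg, charFun_neg, Complex.conj_eq_iff_im, him, hsin]

lemma integral_coe_sign_inner_eq_zero
    (hhalf : ∀ u : E, u ≠ 0 → ν {x | 0 ≤ ⟪u, x⟫} = ν {x | ⟪u, x⟫ ≤ 0}) (u : E) :
    ∫ x, (sign ⟪u, x⟫ : ℝ) ∂ν = 0 := by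
  rcases eq_or_ne u 0 with rfl | hu
  · simp
  · rw [integral_coe_sign (by fun_prop), measureReal_def, measureReal_def, hhalf u hu, sub_self]

variable [FiniteDimensional ℝ E]

lemma map_inner_right_stdGaussian (x : E) :
    (stdGaussian E).map (fun ξ ↦ ⟪ξ, x⟫) = gaussianReal 0 (‖x‖₊ ^ 2) := by
  have h := IsGaussian.map_eq_gaussianReal (μ := stdGaussian E) (innerSL ℝ x)
  rw [integral_strongDual_stdGaussian, variance_dual_stdGaussian, innerSL_apply_norm,
    Real.toNNReal_pow (norm_nonneg x), norm_toNNReal] at h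
  simp_rw [← h, real_inner_comm x]
  rfl

lemma integral_coe_sign_inner_add_stdGaussian (a x : E) :
    ∫ ξ, (sign ⟪ξ + a, x⟫ : ℝ) ∂stdGaussian E =
      2 * ∫ t in 0..⟪a, NormedSpace.normalize x⟫, gaussianPDFReal 0 1 t := by
  rcases eq_or_ne x 0 with rfl | hx
  · simp
  have hlaw : (stdGaussian E).map (fun ξ ↦ ⟪ξ, NormedSpace.normalize x⟫) = gaussianReal 0 1 := by
    rw [map_inner_right_stdGaussian, ← norm_toNNReal, NormedSpace.norm_normalize hx,
      Real.toNNReal_one, one_pow]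
  have hmeas : Measurable fun t : ℝ ↦ (sign (t + ⟪a, NormedSpace.normalize x⟫) : ℝ) :=
    measurable_coe_sign.comp (measurable_add_const _)
  rw [← integral_coe_sign_add_gaussianReal one_ne_zero, ← hlaw,
    integral_map (by fun_prop) hmeas.aestronglyMeasurable]
  simp only [← inner_add_left, sign_inner_normalize]

lemma integral_primitive_gaussianPDFReal_inner_normalize_eq_zero
    (hsign : ∀ u : E, ∫ x, (sign ⟪u, x⟫ : ℝ) ∂ν = 0) (a : E) :
    ∫ x, (∫ t in 0..⟪a, NormedSpace.normalize x⟫, gaussianPDFReal 0 1 t) ∂ν = 0 := by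
  have hint : Integrable (Function.uncurry fun (ξ x : E) ↦ (sign ⟪ξ + a, x⟫ : ℝ))
      ((stdGaussian E).prod ν) :=
    .of_bound (measurable_coe_sign.comp (by fun_prop)).aestronglyMeasurable 1
      (.of_forall fun z ↦ abs_coe_sign_le_one _)
  have hswap := integral_integral_swap hint
  simp only [hsign, integral_zero, integral_coe_sign_inner_add_stdGaussian,
    integral_const_mul] at hswap
  linarith

lemma integral_inner_normalize_mul_exp_pow_eq_zero (hsign : ∀ u : E, ∫ x, (sign ⟪u, x⟫ : ℝ) ∂ν = 0)
    (a : E) (n : ℕ) :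
    ∫ x, ⟪a, NormedSpace.normalize x⟫ *
      Real.exp (-⟪a, NormedSpace.normalize x⟫ ^ 2 / 2) ^ n ∂ν = 0 := by
  have hint : Integrable (fun x ↦ ⟪a, NormedSpace.normalize x⟫) ν :=
    .of_bound (by fun_prop) ‖a‖ (.of_forall fun x ↦ abs_inner_normalize_le a x)
  have hprim (l : ℝ) :
      ∫ x, (∫ t in 0..l * ⟪a, NormedSpace.normalize x⟫, gaussianPDFReal 0 1 t) ∂ν = 0 := by
    simpa only [real_inner_smul_left] using
      integral_primitive_gaussianPDFReal_inner_normalize_eq_zero hsign (l • a)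
  have hpow (s : ℝ) : s * gaussianPDFReal 0 1 (√n * s) =
      (√(2 * Real.pi))⁻¹ * (s * Real.exp (-s ^ 2 / 2) ^ n) := by
    rw [gaussianPDFReal_zero_one_apply, ← Real.exp_nat_mul, mul_pow, Real.sq_sqrt n.cast_nonneg]
    ring_nf
  have hpdf := integral_mul_comp_mul_eq_zero_of_integral_primitive_eq_zero
    (continuous_gaussianPDFReal 0 1) (abs_gaussianPDFReal_le 0 1) hint hprim √n
  simp only [hpow, integral_const_mul] at hpdf
  exact (mul_eq_zero.1 hpdf).resolve_left (by positivity)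

lemma map_neg_map_normalize_eq_self
    (hhalf : ∀ u : E, u ≠ 0 → ν {x | 0 ≤ ⟪u, x⟫} = ν {x | ⟪u, x⟫ ≤ 0}) :
    (ν.map NormedSpace.normalize).map (fun x ↦ -x) = ν.map NormedSpace.normalize := by
  refine map_neg_eq_self_of_integral_sin_inner_eq_zero fun a ↦ ?_
  rw [integral_map (by fun_prop) (by fun_prop)]
  exact integral_sin_eq_zero_of_integral_mul_exp_pow_eq_zero (by fun_prop)
    (.of_forall (abs_inner_normalize_le a))
    (integral_inner_normalize_mul_exp_pow_eq_zero (integral_coe_sign_inner_eq_zero hhalf) a)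

theorem reverse_stein_stmt3_general {Ω : Type*} [MeasurableSpace Ω] {μ : Measure Ω}
    [IsFiniteMeasure μ] {Y : Ω → E} (hY : AEMeasurable Y μ)
    (hhalf : ∀ u : E, u ≠ 0 → μ {ω | 0 ≤ ⟪u, Y ω⟫} = μ {ω | ⟪u, Y ω⟫ ≤ 0}) :
    μ.map (fun ω ↦ ‖Y ω‖⁻¹ • Y ω) = μ.map (fun ω ↦ -(‖Y ω‖⁻¹ • Y ω)) := by
  have hlaw (u : E) (hu : u ≠ 0) :
      μ.map Y {x | 0 ≤ ⟪u, x⟫} = μ.map Y {x | ⟪u, x⟫ ≤ 0} := by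
    rw [Measure.map_apply_of_aemeasurable hY (measurableSet_le (by fun_prop) (by fun_prop)),
      Measure.map_apply_of_aemeasurable hY (measurableSet_le (by fun_prop) (by fun_prop))]
    exact hhalf u hu
  have hdir : (μ.map Y).map NormedSpace.normalize = μ.map (fun ω ↦ ‖Y ω‖⁻¹ • Y ω) :=
    AEMeasurable.map_map_of_aemeasurable (by fun_prop) hY
  have hsymm := map_neg_map_normalize_eq_self hlaw
  rw [hdir, AEMeasurable.map_map_of_aemeasurable (by fun_prop) (by fun_prop)] at hsymm
  exact hsymm.symm

end DirectionalSymmetry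

/-- For an absolutely continuous random vector `Y` in `ℝ^p`, if
`Pr[Y ∈ H] = 1/2` for every central halfspace `H` (boundary hyperplane through the
origin), then `Y` is directionally symmetric: `Y/‖Y‖ ≐ -Y/‖Y‖`. -/
theorem reverse_stein_stmt3 {p : ℕ} {Ω : Type*} [MeasureSpace Ω]
    [IsProbabilityMeasure (ℙ : Measure Ω)]
    (Y : Ω → EuclideanSpace ℝ (Fin p)) (hY : Measurable Y)
    (habs : Measure.map Y ℙ ≪ volume)
    (hhalf : ∀ u : EuclideanSpace ℝ (Fin p), u ≠ 0 →
      (ℙ : Measure Ω) {ω | 0 ≤ ⟪u, Y ω⟫} = 1 / 2) :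
    Measure.map (fun ω => ‖Y ω‖⁻¹ • Y ω) (ℙ : Measure Ω)
      = Measure.map (fun ω => -(‖Y ω‖⁻¹ • Y ω)) (ℙ : Measure Ω) :=
  reverse_stein_stmt3_general hY.aemeasurable fun u hu ↦ by
    simpa [hhalf u hu] using (hhalf (-u) (neg_ne_zero.2 hu)).symm
end

section
/- For p ≥ 3, fixed δ, δ₀ ∈ ℝ^p, and any absolutely continuous distribution for X, the set C = {x : ‖δ̂⁺_JS(x;δ₀) - δ‖ < ‖x - δ‖} contains the set D = {x : ‖δ̂_JS(x;δ₀) - δ‖ < ‖x - δ‖}; moreover C ∩ B₁ = B₁ \ B₂ where B₁ is the ball of radius σ√(p-2) centered at δ₀ and B₂ the ball of radius ‖δ₀ - δ‖ centered at δ, and D ∩ B₂ = ∅ when restricted to B₁ (i.e., within B₁, D ⊆ B₁ \ B₂, in fact D ∩ B₁ ⊊ B₁ \ B₂ when δ₀ ≠ δ). -/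
open Metric

/-- The (untruncated) James–Stein estimator. -/
noncomputable def jsEst {p : ℕ} (σ : ℝ) (x δ₀ : EuclideanSpace ℝ (Fin p)) :
    EuclideanSpace ℝ (Fin p) :=
  (1 - σ ^ 2 * ((p : ℝ) - 2) / ‖x - δ₀‖ ^ 2) • (x - δ₀) + δ₀

/-- The plus-rule (positive-part) James–Stein estimator. -/
noncomputable def jsPlus {p : ℕ} (σ : ℝ) (x δ₀ : EuclideanSpace ℝ (Fin p)) :
    EuclideanSpace ℝ (Fin p) :=
  (max (1 - σ ^ 2 * ((p : ℝ) - 2) / ‖x - δ₀‖ ^ 2) 0) • (x - δ₀) + δ₀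

/-!
Along the line through `δ₀` and `x`, the distance to `δ` is a convex function of the shrinkage
factor. If a nonpositive factor gives a smaller distance than the factor `1`, then so does the
intermediate factor `0`; hence truncating the factor at `0` preserves every improvement.
Strictness comes from the blow-up of the untruncated estimator: as `x → δ₀`, it moves away from `δ₀`
at the rate `σ²(p-2) / ‖x - δ₀‖`, so it improves at no point of a small ball around `δ₀`. That ball
still contains points outside `B₂`, since `δ₀` lies on the boundary of `B₂`.
-/

/-- The set of observations `x` at which the estimator `T` is closer to the parameter `z` than `x`
itself is. The improvement sets `C` and `D` are obtained with `jsShrinkPos` and `jsShrink`. -/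
def improvementSet {X : Type*} [Dist X] (T : X → X) (z : X) : Set X :=
  {x | dist (T x) z < dist x z}

section Shrinkage

variable {E : Type*} [NormedAddCommGroup E] [NormedSpace ℝ E] {s : ℝ} {a x z : E}

/-- The James–Stein estimator shrinking `x` towards `a`, in an arbitrary normed space. The parameter
`s` is the radius of the ball around `a` outside which the shrinkage factor is nonnegative, equal to
`σ√(p-2)` for `jsEst`. At `x = a` the value is `a` whatever the factor, so the convention for
`s ^ 2 / 0` is immaterial. -/
noncomputable def jsShrink (s : ℝ) (a x : E) : E :=
  AffineMap.lineMap a x (1 - s ^ 2 / dist x a ^ 2)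

/-- The positive-part version of `jsShrink`, whose factor is truncated at `0`. -/
noncomputable def jsShrinkPos (s : ℝ) (a x : E) : E :=
  AffineMap.lineMap a x (max (1 - s ^ 2 / dist x a ^ 2) 0)

theorem convexOn_dist_lineMap (a x z : E) :
    ConvexOn ℝ Set.univ fun k : ℝ => dist (AffineMap.lineMap a x k) z :=
  (convexOn_univ_dist z).comp_affineMap (AffineMap.lineMap a x)

theorem dist_left_lt_of_dist_lineMap_lt {k : ℝ} (hk : k ≤ 0)
    (h : dist (AffineMap.lineMap a x k) z < dist x z) : dist a z < dist x z := by
  rcases hk.eq_or_lt with rfl | hk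
  · simpa only [AffineMap.lineMap_apply_zero] using h
  by_contra! hle
  have h_mem : (0 : ℝ) ∈ openSegment ℝ k 1 := by
    rw [openSegment_eq_Ioo (hk.trans one_pos)]
    exact ⟨hk, one_pos⟩
  have h_lt := (convexOn_dist_lineMap a x z).lt_right_of_left_lt
    (Set.mem_univ k) (Set.mem_univ 1) h_mem
  simp only [AffineMap.lineMap_apply_zero, AffineMap.lineMap_apply_one] at h_lt
  exact hle.not_gt (h_lt (h.trans_le hle))

theorem dist_lineMap_max_zero_lt {k : ℝ}
    (h : dist (AffineMap.lineMap a x k) z < dist x z) :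
    dist (AffineMap.lineMap a x (max k 0)) z < dist x z := by
  rcases le_total 0 k with hk | hk
  · rwa [max_eq_left hk]
  · rw [max_eq_right hk, AffineMap.lineMap_apply_zero]
    exact dist_left_lt_of_dist_lineMap_lt hk h

theorem improvementSet_jsShrink_subset (s : ℝ) (a z : E) :
    improvementSet (jsShrink s a) z ⊆ improvementSet (jsShrinkPos s a) z :=
  fun _ hx => dist_lineMap_max_zero_lt hx

theorem jsShrinkPos_eq_of_mem_ball (hx : x ∈ ball a s) : jsShrinkPos s a x = a := by
  rcases eq_or_ne x a with rfl | hne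
  · exact AffineMap.lineMap_same_apply _ _
  have hpos : 0 < dist x a := dist_pos.2 hne
  have h_one_le : 1 ≤ s ^ 2 / dist x a ^ 2 :=
    (one_le_div₀ (by positivity)).2 (pow_le_pow_left₀ dist_nonneg (mem_ball.1 hx).le 2)
  rw [jsShrinkPos, max_eq_right (sub_nonpos.2 h_one_le), AffineMap.lineMap_apply_zero]

theorem improvementSet_jsShrinkPos_inter_ball (s : ℝ) (a z : E) :
    improvementSet (jsShrinkPos s a) z ∩ ball a s = ball a s \ closedBall z (dist a z) := by
  ext x
  rw [Set.inter_comm, Set.mem_inter_iff, Set.mem_sdiff, mem_closedBall, not_le]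
  refine and_congr_right fun hx => ?_
  rw [improvementSet, Set.mem_ofPred_eq, jsShrinkPos_eq_of_mem_ball hx]

theorem sq_div_dist_sub_dist_le_dist_jsShrink (s : ℝ) (a x : E) :
    s ^ 2 / dist x a - dist x a ≤ dist (jsShrink s a x) a := by
  rw [jsShrink, dist_lineMap_left, dist_comm a x, Real.norm_eq_abs]
  calc s ^ 2 / dist x a - dist x a = -(1 - s ^ 2 / dist x a ^ 2) * dist x a := by
        rcases eq_or_ne (dist x a) 0 with h | h
        · simp [h]
        · field_simp
          ring
    _ ≤ |1 - s ^ 2 / dist x a ^ 2| * dist x a := by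
        gcongr
        exact neg_le_abs _

theorem dist_le_dist_jsShrink (h : 2 * (dist x a + dist a z) ≤ s ^ 2 / dist x a) :
    dist x z ≤ dist (jsShrink s a x) z :=
  calc dist x z ≤ dist x a + dist a z := dist_triangle x a z
    _ ≤ s ^ 2 / dist x a - dist x a - dist a z := by linarith
    _ ≤ dist (jsShrink s a x) a - dist a z := by
        gcongr
        exact sq_div_dist_sub_dist_le_dist_jsShrink s a x
    _ ≤ dist (jsShrink s a x) z := by
        rw [sub_le_iff_le_add]
        exact dist_triangle_right _ _ _

theorem exists_mem_ball_notMem_closedBall [Nontrivial E] (a z : E) {ε : ℝ} (hε : 0 < ε) :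
    ∃ x ∈ ball a ε, x ∉ closedBall z (dist a z) := by
  have h_frontier : a ∈ frontier (closedBall z (dist a z)) := by
    rw [frontier_closedBall']
    exact mem_sphere.2 rfl
  rw [frontier_eq_closure_inter_closure] at h_frontier
  obtain ⟨x, hx, h_dist⟩ := Metric.mem_closure_iff.1 h_frontier.2 ε hε
  exact ⟨x, mem_ball'.2 h_dist, hx⟩

theorem exists_mem_ball_sdiff_closedBall_notMem_improvementSet_jsShrink [Nontrivial E]
    (hs : 0 < s) (a z : E) :
    ∃ x ∈ ball a s \ closedBall z (dist a z), x ∉ improvementSet (jsShrink s a) z := by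
  have hw : 0 < 2 * (s + dist a z) := by positivity
  obtain ⟨x, hx, h_out⟩ := exists_mem_ball_notMem_closedBall a z
    (lt_min hs (div_pos (pow_pos hs 2) hw))
  obtain ⟨h_lt, h_small⟩ := lt_min_iff.1 (mem_ball.1 hx)
  have hne : x ≠ a := by
    rintro rfl
    exact h_out (mem_closedBall.2 le_rfl)
  refine ⟨x, ⟨h_lt, h_out⟩, not_lt.2 (dist_le_dist_jsShrink ?_)⟩
  calc 2 * (dist x a + dist a z) ≤ 2 * (s + dist a z) := by gcongr
    _ ≤ s ^ 2 / dist x a := (le_div_comm₀ (dist_pos.2 hne) hw).1 h_small.le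

theorem reverse_stein_stmt13_general [Nontrivial E] (hs : 0 < s) (a z : E) :
    improvementSet (jsShrink s a) z ⊆ improvementSet (jsShrinkPos s a) z ∧
    improvementSet (jsShrinkPos s a) z ∩ ball a s = ball a s \ closedBall z (dist a z) ∧
    improvementSet (jsShrink s a) z ∩ ball a s ⊂ ball a s \ closedBall z (dist a z) := by
  have h_sub := improvementSet_jsShrink_subset s a z
  have h_eq := improvementSet_jsShrinkPos_inter_ball s a z
  obtain ⟨x, hx, h_notMem⟩ := exists_mem_ball_sdiff_closedBall_notMem_improvementSet_jsShrink hs a z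
  refine ⟨h_sub, h_eq, ?_⟩
  rw [Set.ssubset_iff_of_subset (h_eq ▸ Set.inter_subset_inter_left _ h_sub)]
  exact ⟨x, hx, fun h => h_notMem h.1⟩

end Shrinkage

section EuclideanSpace

variable {p : ℕ}

theorem sq_mul_sqrt_sub_two (hp : 2 ≤ p) (σ : ℝ) :
    (σ * Real.sqrt ((p : ℝ) - 2)) ^ 2 = σ ^ 2 * ((p : ℝ) - 2) := by
  rw [mul_pow, Real.sq_sqrt (sub_nonneg.2 (by exact_mod_cast hp))]

theorem jsEst_eq_jsShrink (hp : 2 ≤ p) (σ : ℝ) (x δ₀ : EuclideanSpace ℝ (Fin p)) :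
    jsEst σ x δ₀ = jsShrink (σ * Real.sqrt ((p : ℝ) - 2)) δ₀ x := by
  rw [jsEst, jsShrink, sq_mul_sqrt_sub_two hp, dist_eq_norm, AffineMap.lineMap_apply_module']

theorem jsPlus_eq_jsShrinkPos (hp : 2 ≤ p) (σ : ℝ) (x δ₀ : EuclideanSpace ℝ (Fin p)) :
    jsPlus σ x δ₀ = jsShrinkPos (σ * Real.sqrt ((p : ℝ) - 2)) δ₀ x := by
  rw [jsPlus, jsShrinkPos, sq_mul_sqrt_sub_two hp, dist_eq_norm, AffineMap.lineMap_apply_module']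

theorem mul_sqrt_sub_two_pos (hp : 3 ≤ p) {σ : ℝ} (hσ : 0 < σ) :
    0 < σ * Real.sqrt ((p : ℝ) - 2) :=
  mul_pos hσ (Real.sqrt_pos.2 (sub_pos.2 (by exact_mod_cast hp)))

end EuclideanSpace

/-- The improvement set `C` of the plus-rule James–Stein estimator
contains the improvement set `D` of the untruncated one; moreover
`C ∩ B₁ = B₁ \ B₂` and (when `δ₀ ≠ δ`) `D ∩ B₁ ⊊ B₁ \ B₂`, where `B₁` is the ball of
radius `σ√(p-2)` about `δ₀` and `B₂` the (closed) ball of radius `‖δ₀ - δ‖` about `δ`. -/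
theorem reverse_stein_stmt13 {p : ℕ} (hp : 3 ≤ p) (σ : ℝ) (hσ : 0 < σ)
    (δ δ₀ : EuclideanSpace ℝ (Fin p)) (hne : δ₀ ≠ δ) :
    {x : EuclideanSpace ℝ (Fin p) | ‖jsEst σ x δ₀ - δ‖ < ‖x - δ‖}
        ⊆ {x | ‖jsPlus σ x δ₀ - δ‖ < ‖x - δ‖} ∧
    {x | ‖jsPlus σ x δ₀ - δ‖ < ‖x - δ‖} ∩ ball δ₀ (σ * Real.sqrt ((p : ℝ) - 2))
        = ball δ₀ (σ * Real.sqrt ((p : ℝ) - 2)) \ closedBall δ ‖δ₀ - δ‖ ∧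
    {x | ‖jsEst σ x δ₀ - δ‖ < ‖x - δ‖} ∩ ball δ₀ (σ * Real.sqrt ((p : ℝ) - 2))
        ⊂ ball δ₀ (σ * Real.sqrt ((p : ℝ) - 2)) \ closedBall δ ‖δ₀ - δ‖ := by
  have : Nontrivial (EuclideanSpace ℝ (Fin p)) := ⟨δ₀, δ, hne⟩
  simpa only [improvementSet, jsEst_eq_jsShrink (show 2 ≤ p by omega),
    jsPlus_eq_jsShrinkPos (show 2 ≤ p by omega), dist_eq_norm] using
    reverse_stein_stmt13_general (mul_sqrt_sub_two_pos hp hσ) δ₀ δ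
end

section
/- Let Y be spherically symmetric in ℝ^p, let δ₀ - δ be a fixed (or independent) vector, and let B₁ - δ be a ball having 0 on its boundary and radius r = ‖δ₀ - δ‖. Then the conditional probability Pr[Y ∈ B₁ - δ | ‖Y‖, ‖δ₀-δ‖] equals (1/2)Pr[Z₁²/(Z₁²+⋯+Z_p²) ≥ ‖Y‖²/(4r²)] when ‖Y‖ ≤ 2r, and 0 when ‖Y‖ > 2r, where Z ~ N_p(0, I). -/
open MeasureTheory ProbabilityTheory Metric
open scoped ENNReal

/-!
A point `y` lies in the ball of radius `‖c‖` around `c` exactly when the cosine of the angle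
between `y` and `c` exceeds `‖y‖ / (2 * ‖c‖)`, so the event is that the direction falls in a
circular cone with axis `c`; by Cauchy–Schwarz this cone is empty when `‖y‖ > 2 * ‖c‖`.
Being in a cone is symmetric in the point and the axis, and the mass a rotation-invariant measure
gives to a cone does not depend on its axis. Integrating over point and axis with Fubini therefore
shows that all rotation-invariant probability measures without mass at the origin agree on cones,
in particular with the standard Gaussian. The factor `1 / 2` arises because squaring the cosine
identifies a cone with its reflection, and the closed inequality may replace the strict one
because the boundary of the double cone is a Gaussian null set.
-/

section OpenCone

variable {E F : Type*} [NormedAddCommGroup E] [InnerProductSpace ℝ E]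
  [NormedAddCommGroup F] [InnerProductSpace ℝ F] {t : ℝ} {x y z : E}

/-- The open circular cone with axis `x` of the vectors whose angle with `x` has cosine greater
than `t`. The cosine is cleared of its denominator, so that the zero vector is never in the cone. -/
def openCone (t : ℝ) (x : E) : Set E :=
  {z | t * (‖z‖ * ‖x‖) < inner ℝ z x}

lemma mem_openCone : z ∈ openCone t x ↔ t * (‖z‖ * ‖x‖) < inner ℝ z x :=
  Iff.rfl

lemma mem_openCone_comm : z ∈ openCone t x ↔ x ∈ openCone t z := by
  rw [mem_openCone, mem_openCone, mul_comm ‖z‖, real_inner_comm]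

lemma smul_mem_openCone_iff {a : ℝ} (ha : 0 < a) : a • z ∈ openCone t x ↔ z ∈ openCone t x := by
  rw [mem_openCone, mem_openCone, norm_smul_of_nonneg ha.le, real_inner_smul_left,
    ← mul_lt_mul_iff_right₀ ha (b := t * (‖z‖ * ‖x‖))]
  ring_nf

lemma openCone_smul {a : ℝ} (ha : 0 < a) (t : ℝ) (x : E) : openCone t (a • x) = openCone t x := by
  ext z
  rw [mem_openCone_comm, smul_mem_openCone_iff ha, mem_openCone_comm]

lemma map_mem_openCone_map_iff (g : E →ₗᵢ[ℝ] F) : g z ∈ openCone t (g x) ↔ z ∈ openCone t x := by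
  simp only [mem_openCone, g.norm_map, g.inner_map_map]

lemma openCone_eq_empty_of_one_le (ht : 1 ≤ t) (x : E) : openCone t x = ∅ :=
  Set.eq_empty_of_forall_notMem fun z hz ↦ hz.not_ge <|
    (real_inner_le_norm z x).trans (le_mul_of_one_le_left (by positivity) ht)

lemma lt_abs_inner_iff_mem_openCone_or_neg_mem :
    t * (‖z‖ * ‖x‖) < |inner ℝ z x| ↔ z ∈ openCone t x ∨ -z ∈ openCone t x := by
  rw [mem_openCone, mem_openCone, norm_neg, inner_neg_left, lt_abs]

lemma disjoint_openCone_neg_preimage (ht : 0 ≤ t) (x : E) :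
    Disjoint (openCone t x) (Neg.neg ⁻¹' openCone t x) := by
  refine Set.disjoint_left.2 fun z hz hz_neg ↦ ?_
  rw [mem_openCone] at hz
  rw [Set.mem_preimage, mem_openCone, norm_neg, inner_neg_left] at hz_neg
  have : 0 ≤ t * (‖z‖ * ‖x‖) := by positivity
  linarith

lemma norm_sub_lt_norm_iff_mem_openCone {c : E} (hc : c ≠ 0) :
    ‖y - c‖ < ‖c‖ ↔ y ∈ openCone (‖y‖ / (2 * ‖c‖)) c := by
  have hc' : ‖c‖ ≠ 0 := norm_ne_zero_iff.2 hc
  have hcone : ‖y‖ / (2 * ‖c‖) * (‖y‖ * ‖c‖) = ‖y‖ ^ 2 / 2 := by field_simp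
  rw [mem_openCone, hcone, ← sq_lt_sq₀ (norm_nonneg _) (norm_nonneg _), norm_sub_sq_real]
  constructor <;> intro h <;> linarith

lemma exists_linearIsometryEquiv_norm_smul_eq (x y : E) :
    ∃ g : E ≃ₗᵢ[ℝ] E, g (‖y‖ • x) = ‖x‖ • y :=
  ⟨_, Submodule.reflection_sub (by simp only [norm_smul, norm_norm, mul_comm])⟩

lemma measurableSet_openCone [MeasurableSpace E] [OpensMeasurableSpace E] (t : ℝ) (x : E) :
    MeasurableSet (openCone t x) :=
  (isOpen_lt (by fun_prop) (by fun_prop)).measurableSet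

lemma measure_norm_smul_sub_lt_eq_measure_openCone [MeasurableSpace E] {μ : Measure E}
    (hμ : ∀ᵐ z ∂μ, ‖z‖ = 1) {c : E} (hc : c ≠ 0) {ρ : ℝ} (hρ : 0 < ρ) :
    μ {z | ‖ρ • z - c‖ < ‖c‖} = μ (openCone (ρ / (2 * ‖c‖)) c) := by
  refine measure_congr (hμ.mono fun z hz ↦ propext ?_)
  have hnorm : ‖ρ • z‖ = ρ := by rw [norm_smul_of_nonneg hρ.le, hz, mul_one]
  calc ‖ρ • z - c‖ < ‖c‖
      ↔ ρ • z ∈ openCone (ρ / (2 * ‖c‖)) c := by rw [norm_sub_lt_norm_iff_mem_openCone hc, hnorm]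
    _ ↔ z ∈ openCone (ρ / (2 * ‖c‖)) c := smul_mem_openCone_iff hρ

end OpenCone

section RotationInvariant

variable {E : Type*} [NormedAddCommGroup E] [InnerProductSpace ℝ E] [MeasurableSpace E]

/-- Spherical symmetry of a measure: invariance under all linear isometries. -/
def IsRotationInvariant (μ : Measure E) : Prop :=
  ∀ g : E ≃ₗᵢ[ℝ] E, μ.map g = μ

variable [BorelSpace E] {μ ν : Measure E} {x y : E}

lemma isRotationInvariant_stdGaussian [FiniteDimensional ℝ E] :
    IsRotationInvariant (stdGaussian E) :=
  stdGaussian_map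

namespace IsRotationInvariant

lemma measure_preimage (hμ : IsRotationInvariant μ) (g : E ≃ₗᵢ[ℝ] E) {s : Set E}
    (hs : MeasurableSet s) : μ (g ⁻¹' s) = μ s := by
  rw [← Measure.map_apply g.continuous.measurable hs, hμ g]

lemma measure_openCone_eq (hμ : IsRotationInvariant μ) (t : ℝ) (hx : x ≠ 0) (hy : y ≠ 0) :
    μ (openCone t x) = μ (openCone t y) := by
  obtain ⟨g, hg⟩ := exists_linearIsometryEquiv_norm_smul_eq x y
  have hpreimage : g ⁻¹' openCone t (‖x‖ • y) = openCone t (‖y‖ • x) := by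
    ext z
    rw [← hg]
    exact map_mem_openCone_map_iff g.toLinearIsometry
  rw [← openCone_smul (norm_pos_iff.2 hy) t x, ← hpreimage,
    hμ.measure_preimage g (measurableSet_openCone _ _), openCone_smul (norm_pos_iff.2 hx)]

theorem measure_openCone_mul_univ [SecondCountableTopology E] [SFinite μ] [SFinite ν]
    (hμ : IsRotationInvariant μ) (hν : IsRotationInvariant ν)
    (hμ_ne : ∀ᵐ z ∂μ, z ≠ 0) (hν_ne : ∀ᵐ z ∂ν, z ≠ 0) (t : ℝ) (hx : x ≠ 0) (hy : y ≠ 0) :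
    μ (openCone t x) * ν Set.univ = ν (openCone t y) * μ Set.univ := by
  have hopen : IsOpen {q : E × E | t * (‖q.1‖ * ‖q.2‖) < inner ℝ q.1 q.2} :=
    isOpen_lt (by fun_prop) (by fun_prop)
  have hmeas : MeasurableSet {q : E × E | q.1 ∈ openCone t q.2} := hopen.measurableSet
  calc μ (openCone t x) * ν Set.univ
      = ∫⁻ w, μ (openCone t w) ∂ν := by
        rw [← lintegral_const]
        exact lintegral_congr_ae (hν_ne.mono fun w hw ↦ hμ.measure_openCone_eq t hx hw)
    _ = μ.prod ν {q | q.1 ∈ openCone t q.2} := (Measure.prod_apply_symm hmeas).symm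
    _ = ∫⁻ z, ν {w | z ∈ openCone t w} ∂μ := Measure.prod_apply hmeas
    _ = ∫⁻ z, ν (openCone t z) ∂μ :=
        lintegral_congr fun _ ↦ congrArg ν (Set.ext fun _ ↦ mem_openCone_comm)
    _ = ν (openCone t y) * μ Set.univ := by
        rw [← lintegral_const]
        exact lintegral_congr_ae (hμ_ne.mono fun z hz ↦ hν.measure_openCone_eq t hz hy)

lemma measure_lt_abs_inner (hμ : IsRotationInvariant μ) {t : ℝ} (ht : 0 ≤ t) (x : E) :
    μ {z | t * (‖z‖ * ‖x‖) < |inner ℝ z x|} = 2 * μ (openCone t x) := by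
  have hunion : {z | t * (‖z‖ * ‖x‖) < |inner ℝ z x|} =
      openCone t x ∪ Neg.neg ⁻¹' openCone t x :=
    Set.ext fun _ ↦ lt_abs_inner_iff_mem_openCone_or_neg_mem
  have hneg : μ (Neg.neg ⁻¹' openCone t x) = μ (openCone t x) :=
    hμ.measure_preimage (LinearIsometryEquiv.neg ℝ) (measurableSet_openCone t x)
  rw [hunion, measure_union (disjoint_openCone_neg_preimage ht x)
    (measurable_neg (measurableSet_openCone t x)), hneg, two_mul]

end IsRotationInvariant

end RotationInvariant

section Quadric

variable {ι : Type*} [Fintype ι]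

lemma measure_pi_eq_zero_of_countable_update [DecidableEq ι] {X : ι → Type*}
    [∀ i, MeasurableSpace (X i)] (μ : ∀ i, Measure (X i)) [∀ i, SigmaFinite (μ i)] (j : ι)
    [NullSingletonClass (μ j)] {s : Set (∀ i, X i)} (hs : MeasurableSet s)
    (hcount : ∀ z, {a | Function.update z j a ∈ s}.Countable) : Measure.pi μ s = 0 := by
  rw [← lintegral_indicator_one hs, ← lintegral_zero (μ := Measure.pi μ)]
  refine lintegral_eq_of_lmarginal_eq {j} (measurable_one.indicator hs) measurable_zero ?_
  ext z
  rw [lmarginal_singleton, lmarginal_singleton, lintegral_zero]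
  calc ∫⁻ a, s.indicator 1 (Function.update z j a) ∂μ j
      = μ j {a | Function.update z j a ∈ s} :=
        lintegral_indicator_one (measurable_update z hs)
    _ = 0 := (hcount z).measure_zero _

lemma measure_pi_sq_eq_mul_sum_sq (μ : ι → Measure ℝ) [∀ k, SigmaFinite (μ k)] {i j : ι}
    [NullSingletonClass (μ j)] (hij : i ≠ j) {s : ℝ} (hs : s ≠ 0) :
    Measure.pi μ {z | z i ^ 2 = s * ∑ k, z k ^ 2} = 0 := by
  classical
  refine measure_pi_eq_zero_of_countable_update μ j
    (measurableSet_eq_fun (by fun_prop) (by fun_prop)) fun z ↦ ?_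
  have hroot (a : ℝ) (ha : Function.update z j a i ^ 2 = s * ∑ k, Function.update z j a k ^ 2) :
      a ^ 2 = z i ^ 2 / s - ∑ k ∈ Finset.univ.erase j, z k ^ 2 := by
    have hsum : ∑ k, Function.update z j a k ^ 2 =
        a ^ 2 + ∑ k ∈ Finset.univ.erase j, z k ^ 2 := by
      rw [← Finset.add_sum_erase _ _ (Finset.mem_univ j), Function.update_self]
      congr 1
      refine Finset.sum_congr rfl fun k hk ↦ ?_
      rw [Function.update_of_ne (Finset.ne_of_mem_erase hk)]
    rw [Function.update_of_ne hij, hsum] at ha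
    rw [ha, mul_div_cancel_left₀ _ hs, add_sub_cancel_right]
  exact ((Multiset.finite_toSet _).subset fun a ha ↦
    (Polynomial.mem_nthRoots two_pos).2 (hroot a ha)).countable

end Quadric

section Gaussian

instance nullSingletonClass_stdGaussian {E : Type*} [NormedAddCommGroup E] [InnerProductSpace ℝ E]
    [FiniteDimensional ℝ E] [Nontrivial E] [MeasurableSpace E] [BorelSpace E] :
    NullSingletonClass (stdGaussian E) where
  measure_singleton x := by
    have := nullSingletonClass_gaussianReal (μ := 0) one_ne_zero
    have : Nonempty (Fin (Module.finrank ℝ E)) := Fin.pos_iff_nonempty.1 Module.finrank_pos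
    let e := (stdOrthonormalBasis ℝ E).repr.symm
    have he : Measurable e := e.continuous.measurable
    rw [← stdGaussian_map e, Measure.map_apply he (measurableSet_singleton x),
      ← map_pi_eq_stdGaussian, Measure.map_apply (by fun_prop) (he (measurableSet_singleton x))]
    exact ((Set.subsingleton_singleton.preimage e.injective).preimage
      (WithLp.toLp_injective 2)).measure_zero _

variable {ι : Type*} [Fintype ι]

lemma le_sq_div_sum_sq_iff_of_ne {z : ι → ℝ} {i : ι} {s : ℝ} (hz : z i ^ 2 ≠ s * ∑ k, z k ^ 2) :
    s ≤ z i ^ 2 / ∑ k, z k ^ 2 ↔ s * ∑ k, z k ^ 2 < z i ^ 2 := by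
  have hle : z i ^ 2 ≤ ∑ k, z k ^ 2 :=
    Finset.single_le_sum (fun k _ ↦ sq_nonneg (z k)) (Finset.mem_univ i)
  have hpos : 0 < ∑ k, z k ^ 2 := by
    refine ((sq_nonneg (z i)).trans hle).lt_of_ne fun h0 ↦ hz ?_
    rw [← h0, mul_zero]
    exact (hle.trans_eq h0.symm).antisymm (sq_nonneg _)
  rw [le_div_iff₀ hpos, hz.symm.le_iff_lt]

lemma mul_sum_sq_lt_sq_iff [DecidableEq ι] {t : ℝ} (ht : 0 ≤ t) (z : EuclideanSpace ℝ ι) (i : ι) :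
    t ^ 2 * ∑ k, z k ^ 2 < z i ^ 2 ↔
      t * (‖z‖ * ‖EuclideanSpace.single i (1 : ℝ)‖) <
        |inner ℝ z (EuclideanSpace.single i (1 : ℝ))| := by
  rw [← EuclideanSpace.real_norm_sq_eq, ← mul_pow, sq_lt_sq, abs_of_nonneg (by positivity)]
  simp [EuclideanSpace.inner_single_right]

theorem pi_gaussianReal_le_sq_div_sum_sq [DecidableEq ι] {i j : ι} (hij : i ≠ j) {t : ℝ}
    (ht : 0 < t) :
    (Measure.pi fun _ : ι => gaussianReal 0 1) {z | t ^ 2 ≤ z i ^ 2 / ∑ k, z k ^ 2} =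
      2 * stdGaussian (EuclideanSpace ℝ ι) (openCone t (EuclideanSpace.single i 1)) := by
  have := nullSingletonClass_gaussianReal (μ := 0) one_ne_zero
  have hboundary : ∀ᵐ z ∂(Measure.pi fun _ : ι => gaussianReal 0 1),
      z i ^ 2 ≠ t ^ 2 * ∑ k, z k ^ 2 := by
    simpa only [ae_iff, not_not] using
      measure_pi_sq_eq_mul_sum_sq (fun _ ↦ gaussianReal 0 1) hij (pow_pos ht 2).ne'
  rw [← isRotationInvariant_stdGaussian.measure_lt_abs_inner ht.le, ← map_pi_eq_stdGaussian,
    Measure.map_apply (by fun_prop) (isOpen_lt (by fun_prop) (by fun_prop)).measurableSet]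
  refine measure_congr (hboundary.mono fun z hz ↦ propext ?_)
  exact (le_sq_div_sum_sq_iff_of_ne hz).trans (mul_sum_sq_lt_sq_iff ht.le (WithLp.toLp 2 z) i)

theorem IsRotationInvariant.measure_openCone_eq_half_pi_gaussianReal
    {μ : Measure (EuclideanSpace ℝ ι)} [IsProbabilityMeasure μ] (hμ : IsRotationInvariant μ)
    (hμ_ne : ∀ᵐ z ∂μ, z ≠ 0) {x : EuclideanSpace ℝ ι} (hx : x ≠ 0) {i j : ι} (hij : i ≠ j)
    {t : ℝ} (ht : 0 < t) :
    μ (openCone t x) = (1 / 2) * (Measure.pi fun _ : ι => gaussianReal 0 1)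
      {z | t ^ 2 ≤ z i ^ 2 / ∑ k, z k ^ 2} := by
  classical
  have : Nontrivial (EuclideanSpace ℝ ι) := nontrivial_of_ne x 0 hx
  have hcone : μ (openCone t x) =
      stdGaussian (EuclideanSpace ℝ ι) (openCone t (EuclideanSpace.single i 1)) := by
    simpa using hμ.measure_openCone_mul_univ isRotationInvariant_stdGaussian hμ_ne
      (Measure.ae_ne _ 0) t hx (y := EuclideanSpace.single i (1 : ℝ)) (by simp)
  rw [pi_gaussianReal_le_sq_div_sum_sq hij ht, hcone, ← mul_assoc, one_div,
    ENNReal.inv_mul_cancel two_ne_zero ENNReal.ofNat_ne_top, one_mul]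

end Gaussian

/-- For a spherically symmetric direction (uniform on the sphere, i.e.
any rotation-invariant probability measure `μ` on `S^{p-1}`), the conditional
probability that `ρ·U` lands in an open ball `B` of radius `r` with `0 ∈ ∂B`
(center `c`, `‖c‖ = r`) equals `(1/2)·Pr[Z₁²/(Z₁²+⋯+Z_p²) ≥ ρ²/(4r²)]` when
`ρ ≤ 2r`, and `0` when `ρ > 2r`. -/
theorem reverse_stein_stmt17 {p : ℕ} (hp : 2 ≤ p)
    (μ : Measure (EuclideanSpace ℝ (Fin p))) [IsProbabilityMeasure μ]
    (hinv : ∀ g : EuclideanSpace ℝ (Fin p) ≃ₗᵢ[ℝ] EuclideanSpace ℝ (Fin p),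
      Measure.map g μ = μ)
    (hsphere : μ (sphere (0 : EuclideanSpace ℝ (Fin p)) 1) = 1)
    (c : EuclideanSpace ℝ (Fin p)) (r ρ : ℝ) (hr : 0 < r) (hc : ‖c‖ = r) (hρ : 0 < ρ) :
    μ {z | ‖ρ • z - c‖ < r}
      = if ρ ≤ 2 * r then
          (1 / 2) * (Measure.pi fun _ : Fin p => gaussianReal 0 1)
            {z | ρ ^ 2 / (4 * r ^ 2) ≤ z ⟨0, by omega⟩ ^ 2 / ∑ i, z i ^ 2}
        else 0 := by
  have hnorm : ∀ᵐ z ∂μ, ‖z‖ = 1 := by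
    filter_upwards [(mem_ae_iff_prob_eq_one isClosed_sphere.measurableSet).2 hsphere] with z hz
    exact mem_sphere_zero_iff_norm.1 hz
  have hc_ne : c ≠ 0 := norm_pos_iff.1 (hc ▸ hr)
  subst hc
  rw [measure_norm_smul_sub_lt_eq_measure_openCone hnorm hc_ne hρ]
  split_ifs with h
  · have : Nontrivial (Fin p) := Fin.nontrivial_iff_two_le.2 hp
    obtain ⟨j, hj⟩ := exists_ne (⟨0, by omega⟩ : Fin p)
    have hμ_ne : ∀ᵐ z ∂μ, z ≠ 0 := hnorm.mono fun z hz ↦ norm_ne_zero_iff.1 (hz ▸ one_ne_zero)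
    rw [show ρ ^ 2 / (4 * ‖c‖ ^ 2) = (ρ / (2 * ‖c‖)) ^ 2 by ring]
    exact IsRotationInvariant.measure_openCone_eq_half_pi_gaussianReal hinv hμ_ne hc_ne hj.symm
      (by positivity)
  · have : 1 ≤ ρ / (2 * ‖c‖) := (one_le_div (by positivity)).2 (not_le.1 h).le
    rw [openCone_eq_empty_of_one_le this, measure_empty]
end
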